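/- Let s₀ > d be an integer and ρ ≥ 0. If a, b ∈ H^{ρ+s₀}(𝕋^d;ℂ) are functions (symbols independent of ξ), then for any s ∈ ℝ and any h ∈ H^s(𝕋^d;ℂ): ‖(T_a T_b − T_{ab})h‖_{H^{s+ρ}} ≤ C ‖a‖_{H^{ρ+s₀}} ‖b‖_{H^{ρ+s₀}} ‖h‖_{H^s}. -/

import Mathlib

open MeasureTheory Complex Real Filter

noncomputable section

namespace QLNLS

/-- Points of `ℝ^d` (resp. the torus `𝕋^d = (ℝ/2πℤ)^d`, via `2π`-periodic functions). -/
abbrev Vec (d : ℕ) := Fin d → ℝ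
/-- Frequency lattice `ℤ^d`. -/
abbrev Zd (d : ℕ) := Fin d → ℤ
/-- Functions on the torus. -/
abbrev Fn (d : ℕ) := Vec d → ℂ
/-- Sequences of Fourier coefficients. -/
abbrev Seq (d : ℕ) := Zd d → ℂ
/-- Symbols `a(x, ξ)`. -/
abbrev Sym (d : ℕ) := Vec d → Vec d → ℂ

variable {d : ℕ}

/-- Euclidean norm `|ξ|`. -/
def rnorm (ξ : Vec d) : ℝ := Real.sqrt (∑ i, (ξ i) ^ 2)

/-- Euclidean norm `|n|` of a lattice point. -/
def znorm (n : Zd d) : ℝ := Real.sqrt (∑ i, ((n i : ℝ)) ^ 2)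

/-- Japanese bracket `⟨n⟩ = (1+|n|²)^{1/2}`. -/
def jb (n : Zd d) : ℝ := Real.sqrt (1 + ∑ i, ((n i : ℝ)) ^ 2)

/-- Japanese bracket `⟨ξ⟩` for real frequencies. -/
def jbR (ξ : Vec d) : ℝ := Real.sqrt (1 + ∑ i, (ξ i) ^ 2)

/-- `2π`-periodicity in every coordinate. -/
def Periodic2pi (u : Fn d) : Prop :=
  ∀ (x : Vec d) (n : Zd d), u (fun i => x i + 2 * π * (n i : ℝ)) = u x

/-- A fundamental domain of the torus. -/
def box (d : ℕ) : Set (Vec d) := Set.univ.pi fun _ : Fin d => Set.Ioc (0 : ℝ) (2 * π)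

/-- Fourier coefficient `û(n) = (2π)^{-d/2} ∫ u(x) e^{-i n·x} dx`. -/
def fCoeff (u : Fn d) (n : Zd d) : ℂ :=
  (((2 * π : ℝ) ^ (-(d : ℝ) / 2) : ℝ) : ℂ) *
    ∫ x in box d, u x * Complex.exp (-Complex.I * ((∑ i, (n i : ℝ) * x i : ℝ) : ℂ))

/-- Squared Sobolev norm of a coefficient sequence. -/
def hsNormSq (s : ℝ) (c : Seq d) : ℝ := ∑' n : Zd d, jb n ^ (2 * s) * ‖c n‖ ^ 2

/-- Sobolev norm of a coefficient sequence. -/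
def hsNorm (s : ℝ) (c : Seq d) : ℝ := Real.sqrt (hsNormSq s c)

/-- Membership of a coefficient sequence in `H^s`. -/
def InHsSeq (s : ℝ) (c : Seq d) : Prop :=
  Summable fun n : Zd d => jb n ^ (2 * s) * ‖c n‖ ^ 2

/-- `H^s` norm of a function on the torus. -/
def sobNorm (s : ℝ) (u : Fn d) : ℝ := hsNorm s (fCoeff u)

/-- `u ∈ H^s(𝕋^d;ℂ)`: `u` is `2π`-periodic, its Fourier coefficients are `H^s`-summable,
and `u` is represented by its Fourier series. -/
def InHs (s : ℝ) (u : Fn d) : Prop :=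
  Periodic2pi u ∧ InHsSeq s (fCoeff u) ∧
    ∀ x : Vec d, HasSum
      (fun n : Zd d => (((2 * π : ℝ) ^ (-(d : ℝ) / 2) : ℝ) : ℂ) * fCoeff u n *
        Complex.exp (Complex.I * ((∑ i, (n i : ℝ) * x i : ℝ) : ℂ))) (u x)

/-- Partial derivative `∂_{x_i}` of a function. -/
def pdF (i : Fin d) (u : Fn d) : Fn d := fun x => fderiv ℝ u x (Pi.single i 1)

/-- Partial derivative `∂_{x_i}` of a symbol. -/
def pdx (i : Fin d) (a : Sym d) : Sym d := fun x ξ => fderiv ℝ (fun y => a y ξ) x (Pi.single i 1)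

/-- Partial derivative `∂_{ξ_i}` of a symbol. -/
def pdxi (i : Fin d) (a : Sym d) : Sym d := fun x ξ => fderiv ℝ (fun η => a x η) ξ (Pi.single i 1)

/-- Iterated mixed partial derivative of a symbol along a list of directions
(`Sum.inl j` = `∂_{x_j}`, `Sum.inr j` = `∂_{ξ_j}`). -/
def mderiv (L : List (Fin d ⊕ Fin d)) (a : Sym d) : Sym d :=
  L.foldr (fun i b => match i with | Sum.inl j => pdx j b | Sum.inr j => pdxi j b) a

/-- Number of `ξ`-derivatives in a list of directions. -/
def nXi (L : List (Fin d ⊕ Fin d)) : ℕ := (L.filter fun i => i.isRight).length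

/-- The set of values whose supremum is the symbol seminorm `|a|_{𝒩^m_s}`. -/
def symVals (m : ℝ) (s : ℕ) (a : Sym d) : Set ℝ :=
  { r | ∃ (L : List (Fin d ⊕ Fin d)) (x ξ : Vec d), L.length ≤ s ∧
        r = jbR ξ ^ (-m + (nXi L : ℝ)) * ‖mderiv L a x ξ‖ }

/-- Symbol seminorm `|a|_{𝒩^m_s}`. -/
def symNorm (m : ℝ) (s : ℕ) (a : Sym d) : ℝ := sSup (symVals m s a)

/-- Membership in the symbol class `𝒩^m_s`. -/
def InSymClass (m : ℝ) (s : ℕ) (a : Sym d) : Prop :=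
  ContDiff ℝ (s : ℕ∞) (Function.uncurry a) ∧ (∀ ξ, Periodic2pi fun x => a x ξ) ∧
    BddAbove (symVals m s a)

/-- Poisson bracket `{a,b}`. -/
def poisson (a b : Sym d) : Sym d := fun x ξ =>
  ∑ j, (pdxi j a x ξ * pdx j b x ξ - pdx j a x ξ * pdxi j b x ξ)

/-- The second-order bracket `σ(a,b)`. -/
def sigmaB (a b : Sym d) : Sym d := fun x ξ =>
  ∑ j, ∑ k,
    (pdxi j (pdxi k a) x ξ * pdx j (pdx k b) x ξ
      - 2 * pdx j (pdxi k a) x ξ * pdxi j (pdx k b) x ξ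
      + pdx j (pdx k a) x ξ * pdxi j (pdxi k b) x ξ)

/-- An admissible cut-off function `χ`. -/
structure IsCutoff (χ : ℝ → ℝ) : Prop where
  smooth : ContDiff ℝ (⊤ : ℕ∞) χ
  mem : ∀ t : ℝ, χ t ∈ Set.Icc (0 : ℝ) 1
  eq_one : ∀ t : ℝ, |t| ≤ 5 / 4 → χ t = 1
  eq_zero : ∀ t : ℝ, 8 / 5 ≤ |t| → χ t = 0

/-- `x`-Fourier coefficient `â(η, ξ)` of a symbol. -/
def symCoeff (a : Sym d) (η : Zd d) (ξ : Vec d) : ℂ := fCoeff (fun x => a x ξ) η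

/-- Midpoint `(j+k)/2` of two lattice points. -/
def mid (j k : Zd d) : Vec d := fun i => ((j i + k i : ℤ) : ℝ) / 2

/-- The paradifferential cut-off factor `χ_ε(|j-k|/⟨j+k⟩) = χ(|j-k|/(ε⟨j+k⟩))`. -/
def cutFactor (χ : ℝ → ℝ) (ε : ℝ) (j k : Zd d) : ℝ :=
  χ (znorm (j - k) / (ε * jb (j + k)))

/-- The Weyl paradifferential operator `T_a`, acting on Fourier coefficient sequences:
`(T_a h)^(j) = (2π)^{-d/2} Σ_k χ_ε(|j-k|/⟨j+k⟩) â(j-k,(j+k)/2) ĥ(k)`. -/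
def paraC (χ : ℝ → ℝ) (ε : ℝ) (a : Sym d) (c : Seq d) : Seq d := fun j =>
  (((2 * π : ℝ) ^ (-(d : ℝ) / 2) : ℝ) : ℂ) *
    ∑' k : Zd d, ((cutFactor χ ε j k : ℝ) : ℂ) * symCoeff a (j - k) (mid j k) * c k

/-- The operator `R_a` built from the difference of two cut-offs. -/
def remC (χ : ℝ → ℝ) (ε₁ ε₂ : ℝ) (a : Sym d) (c : Seq d) : Seq d := fun j =>
  (((2 * π : ℝ) ^ (-(d : ℝ) / 2) : ℝ) : ℂ) *
    ∑' k : Zd d, ((cutFactor χ ε₁ j k - cutFactor χ ε₂ j k : ℝ) : ℂ) *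
      symCoeff a (j - k) (mid j k) * c k

/-- Wirtinger derivative `∂_{y_j} = (∂_{Re y_j} - i ∂_{Im y_j})/2`. -/
def wdP {n : ℕ} (j : Fin n) (G : (Fin n → ℂ) → ℂ) : (Fin n → ℂ) → ℂ := fun y =>
  (fderiv ℝ G y (Pi.single j 1) - Complex.I * fderiv ℝ G y (Pi.single j Complex.I)) / 2

/-- Wirtinger derivative `∂_{ȳ_j} = (∂_{Re y_j} + i ∂_{Im y_j})/2`. -/
def wdM {n : ℕ} (j : Fin n) (G : (Fin n → ℂ) → ℂ) : (Fin n → ℂ) → ℂ := fun y =>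
  (fderiv ℝ G y (Pi.single j 1) + Complex.I * fderiv ℝ G y (Pi.single j Complex.I)) / 2

/-- The 1-jet `(u, ∇u)` of a function, as a point of `ℂ^{d+1}`. -/
def jet (u : Fn d) (x : Vec d) : Fin (d + 1) → ℂ :=
  Fin.cons (u x) fun j => pdF j u x

/-- The Hamiltonian nonlinearity
`P(u) = (∂_{ū}F)(u,∇u) - Σ_j ∂_{x_j}((∂_{ū_{x_j}}F)(u,∇u))`. -/
def Pop (F : (Fin (d + 1) → ℂ) → ℂ) (u : Fn d) : Fn d := fun x =>
  wdM 0 F (jet u x) - ∑ j, pdF j (fun y => wdM (Fin.succ j) F (jet u y)) x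

/-- `F ∈ C^∞(ℂ^{d+1};ℝ)` in the real sense, with a zero of order at least 3 at the origin. -/
def GoodF (d : ℕ) (F : (Fin (d + 1) → ℂ) → ℂ) : Prop :=
  ContDiff ℝ (⊤ : ℕ∞) F ∧ (∀ y, (F y).im = 0) ∧ ∀ k : ℕ, k ≤ 2 → iteratedFDeriv ℝ k F 0 = 0

/-- Global ellipticity (Hypothesis 1.1). -/
def Elliptic (d : ℕ) (F : (Fin (d + 1) → ℂ) → ℂ) : Prop :=
  ∃ c₁ > (0 : ℝ), ∃ c₂ > (0 : ℝ), ∀ (ξ : Vec d) (y : Fin (d + 1) → ℂ),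
    (c₁ * ∑ i, (ξ i) ^ 2 ≤
      (∑ j, ∑ k, ((ξ j * ξ k : ℝ) : ℂ) *
        ((if j = k then 1 else 0) + wdP (Fin.succ j) (wdM (Fin.succ k) F) y)).re) ∧
    (ξ ≠ 0 → c₂ ≤
      (1 + (∑ j, ∑ k, ((ξ j * ξ k : ℝ) : ℂ) * wdP (Fin.succ j) (wdM (Fin.succ k) F) y).re
            / ∑ i, (ξ i) ^ 2) ^ 2
        - ‖∑ j, ∑ k, ((ξ j * ξ k : ℝ) : ℂ) * wdM (Fin.succ j) (wdM (Fin.succ k) F) y‖ ^ 2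
            / (∑ i, (ξ i) ^ 2) ^ 2)

/-- The symbol `a₂(x,ξ) = Σ_{j,k} (∂_{ū_{x_k}}∂_{u_{x_j}}F)(u,∇u) ξ_j ξ_k`. -/
def a2sym (F : (Fin (d + 1) → ℂ) → ℂ) (u : Fn d) : Sym d := fun x ξ =>
  ∑ j, ∑ k, ((ξ j * ξ k : ℝ) : ℂ) * wdP (Fin.succ j) (wdM (Fin.succ k) F) (jet u x)

/-- The symbol `b₂(x,ξ) = Σ_{j,k} (∂_{ū_{x_k}}∂_{ū_{x_j}}F)(u,∇u) ξ_j ξ_k`. -/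
def b2sym (F : (Fin (d + 1) → ℂ) → ℂ) (u : Fn d) : Sym d := fun x ξ =>
  ∑ j, ∑ k, ((ξ j * ξ k : ℝ) : ℂ) * wdM (Fin.succ j) (wdM (Fin.succ k) F) (jet u x)

/-- The symbol `a₁(x,ξ) = (i/2) Σ_j ((∂_{ū}∂_{u_{x_j}}F) - (∂_u∂_{ū_{x_j}}F))(u,∇u) ξ_j`. -/
def a1sym (F : (Fin (d + 1) → ℂ) → ℂ) (u : Fn d) : Sym d := fun x ξ =>
  Complex.I / 2 * ∑ j, ((ξ j : ℝ) : ℂ) *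
    (wdM 0 (wdP (Fin.succ j) F) (jet u x) - wdP 0 (wdM (Fin.succ j) F) (jet u x))

/-- Conjugation of a coefficient sequence: the sequence of `conj u`. -/
def starSeq (c : Seq d) : Seq d := fun n => (starRingEnd ℂ) (c (-n))

/-- Pointwise conjugate of a function. -/
def starF (u : Fn d) : Fn d := fun x => (starRingEnd ℂ) (u x)

/-- Pointwise conjugate of a symbol. -/
def starSym (a : Sym d) : Sym d := fun x ξ => (starRingEnd ℂ) (a x ξ)

/-- The symbol `(x,ξ) ↦ conj (a(x,-ξ))`. -/
def flipSym (a : Sym d) : Sym d := fun x ξ => (starRingEnd ℂ) (a x (-ξ))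

/-- The matrix `E = diag(1,-1)` as a sign vector. -/
def Em : Fin 2 → ℂ := ![1, -1]

/-- `Op^BW` of a 2×2 matrix of symbols, acting on vectors of coefficient sequences. -/
def opBWmat (χ : ℝ → ℝ) (ε : ℝ) (A : Fin 2 → Fin 2 → Sym d) (C : Fin 2 → Seq d) :
    Fin 2 → Seq d := fun σ j => ∑ τ, paraC χ ε (A σ τ) (C τ) j

/-- The symbol `|ξ|²`. -/
def sq2sym (d : ℕ) : Sym d := fun _ ξ => (((rnorm ξ) ^ 2 : ℝ) : ℂ)

/-- The matrix of symbols `A₂(x,ξ)`. -/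
def A2mat (F : (Fin (d + 1) → ℂ) → ℂ) (u : Fn d) : Fin 2 → Fin 2 → Sym d :=
  ![![a2sym F u, b2sym F u], ![flipSym (b2sym F u), a2sym F u]]

/-- The matrix of symbols `A₁(x,ξ)`. -/
def A1mat (F : (Fin (d + 1) → ℂ) → ℂ) (u : Fn d) : Fin 2 → Fin 2 → Sym d :=
  ![![a1sym F u, 0], ![0, flipSym (a1sym F u)]]

/-- The full matrix of symbols `|ξ|²𝟙 + A₂(x,ξ) + A₁(x,ξ)`. -/
def sysSym (F : (Fin (d + 1) → ℂ) → ℂ) (u : Fn d) : Fin 2 → Fin 2 → Sym d := fun σ τ =>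
  fun x ξ => (if σ = τ then sq2sym d x ξ else 0) + A2mat F u σ τ x ξ + A1mat F u σ τ x ξ

/-- `H^s` norm of a vector of coefficient sequences. -/
def hsNormVec (s : ℝ) (C : Fin 2 → Seq d) : ℝ := hsNorm s (C 0) + hsNorm s (C 1)

/-- Membership of a vector of coefficient sequences in `H^s`. -/
def InHsVec (s : ℝ) (C : Fin 2 → Seq d) : Prop := InHsSeq s (C 0) ∧ InHsSeq s (C 1)

/-- The `L²` pairing `(U,V) = ∫ (u v̄ + ū v)`, at the level of Fourier coefficients. -/
def pairL2 (C E : Fin 2 → Seq d) : ℂ :=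
  ∑' n : Zd d, (C 0 n * (starRingEnd ℂ) (E 0 n) + C 1 n * (starRingEnd ℂ) (E 1 n))

/-- The scalar `L²` pairing, at the level of Fourier coefficients. -/
def pairS (c e : Seq d) : ℂ := ∑' n : Zd d, c n * (starRingEnd ℂ) (e n)

/-- A matrix of operators is real-to-real: it preserves the subspace `𝒰 = {(u, ū)}`. -/
def PreservesReality (M : (Fin 2 → Seq d) → (Fin 2 → Seq d)) : Prop :=
  ∀ c : Seq d, M ![c, starSeq c] 1 = starSeq (M ![c, starSeq c] 0)

/-- The coefficient vector of `(v(t), conj v(t))`. -/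
def Vvec (v : ℝ → Fn d) (t : ℝ) : Fin 2 → Seq d :=
  ![fCoeff (v t), starSeq (fCoeff (v t))]

/-- `V = (v, v̄)` solves `V̇ = iE Op^BW(|ξ|²𝟙 + A₂ + A₁)V` on `[0,T)`. -/
def SolvesLin (χ : ℝ → ℝ) (ε : ℝ) (F : (Fin (d + 1) → ℂ) → ℂ) (T : ℝ)
    (u v : ℝ → Fn d) : Prop :=
  ∀ᵐ t ∂(volume.restrict (Set.Ico (0 : ℝ) T)), ∀ (σ : Fin 2) (n : Zd d),
    HasDerivAt (fun τ => Vvec v τ σ n)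
      (Complex.I * Em σ * opBWmat χ ε (sysSym F (u t)) (Vvec v t) σ n) t

/-- The regularity hypothesis (4.1):
`u ∈ L^∞([0,T);H^s) ∩ Lip([0,T);H^{s-2})`, with
`sup_t ‖u(t)‖_{H^{2s₀+7}} ≤ r` and `‖∂_t u‖_{H^{2s₀+5}} ≤ r` (as a Lipschitz bound). -/
def RegHyp (s₀ : ℕ) (s T r : ℝ) (u : ℝ → Fn d) : Prop :=
  (∀ t ∈ Set.Ico (0 : ℝ) T, InHs s (u t)) ∧
  (∃ M : ℝ, ∀ t ∈ Set.Ico (0 : ℝ) T, sobNorm s (u t) ≤ M) ∧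
  (∃ L : ℝ, ∀ t₁ ∈ Set.Ico (0 : ℝ) T, ∀ t₂ ∈ Set.Ico (0 : ℝ) T,
    sobNorm (s - 2) (u t₁ - u t₂) ≤ L * |t₁ - t₂|) ∧
  (∀ t ∈ Set.Ico (0 : ℝ) T, sobNorm (2 * (s₀ : ℝ) + 7) (u t) ≤ r) ∧
  (∀ t₁ ∈ Set.Ico (0 : ℝ) T, ∀ t₂ ∈ Set.Ico (0 : ℝ) T,
    sobNorm (2 * (s₀ : ℝ) + 5) (u t₁ - u t₂) ≤ r * |t₁ - t₂|)

/-- `v ∈ L^∞([0,T);H^s) ∩ Lip([0,T);H^{s-2})`. -/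
def RegSol (s T : ℝ) (v : ℝ → Fn d) : Prop :=
  (∀ t ∈ Set.Ico (0 : ℝ) T, InHs s (v t)) ∧
  (∃ M : ℝ, ∀ t ∈ Set.Ico (0 : ℝ) T, sobNorm s (v t) ≤ M) ∧
  (∃ L : ℝ, ∀ t₁ ∈ Set.Ico (0 : ℝ) T, ∀ t₂ ∈ Set.Ico (0 : ℝ) T,
    sobNorm (s - 2) (v t₁ - v t₂) ≤ L * |t₁ - t₂|)

/-- The high-frequency cut-off `𝒳_R(ξ) = 1 - χ(|ξ|/R)`. -/
def cutXR (χ : ℝ → ℝ) (R : ℝ) (ξ : Vec d) : ℝ := 1 - χ (rnorm ξ / R)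

/-- `ã_{2,R}(x,ξ) = |ξ|^{-2} a₂(x,ξ) 𝒳_R(ξ)`. -/
def a2til (F : (Fin (d + 1) → ℂ) → ℂ) (u : Fn d) (χ : ℝ → ℝ) (R : ℝ) : Sym d := fun x ξ =>
  ((((rnorm ξ) ^ 2)⁻¹ * cutXR χ R ξ : ℝ) : ℂ) * a2sym F u x ξ

/-- `b̃_{2,R}(x,ξ) = |ξ|^{-2} b₂(x,ξ) 𝒳_R(ξ)`. -/
def b2til (F : (Fin (d + 1) → ℂ) → ℂ) (u : Fn d) (χ : ℝ → ℝ) (R : ℝ) : Sym d := fun x ξ =>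
  ((((rnorm ξ) ^ 2)⁻¹ * cutXR χ R ξ : ℝ) : ℂ) * b2sym F u x ξ

/-- `λ₂ = ((1+ã_{2,R})² - |b̃_{2,R}|²)^{1/2}`. -/
def lam2 (F : (Fin (d + 1) → ℂ) → ℂ) (u : Fn d) (χ : ℝ → ℝ) (R : ℝ) :
    Vec d → Vec d → ℝ := fun x ξ =>
  Real.sqrt ((1 + (a2til F u χ R x ξ).re) ^ 2 - ‖b2til F u χ R x ξ‖ ^ 2)

/-- The normalizing denominator `(2λ₂(1+ã_{2,R}+λ₂))^{1/2}`. -/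
def sden (F : (Fin (d + 1) → ℂ) → ℂ) (u : Fn d) (χ : ℝ → ℝ) (R : ℝ) :
    Vec d → Vec d → ℝ := fun x ξ =>
  Real.sqrt (2 * lam2 F u χ R x ξ * (1 + (a2til F u χ R x ξ).re + lam2 F u χ R x ξ))

/-- The symbol `s₁`. -/
def s1sym (F : (Fin (d + 1) → ℂ) → ℂ) (u : Fn d) (χ : ℝ → ℝ) (R : ℝ) : Sym d := fun x ξ =>
  (((1 + (a2til F u χ R x ξ).re + lam2 F u χ R x ξ) / sden F u χ R x ξ : ℝ) : ℂ)

/-- The symbol `s₂`. -/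
def s2sym (F : (Fin (d + 1) → ℂ) → ℂ) (u : Fn d) (χ : ℝ → ℝ) (R : ℝ) : Sym d := fun x ξ =>
  -b2til F u χ R x ξ / ((sden F u χ R x ξ : ℝ) : ℂ)

/-- `ã⁺_{2,R} = λ₂ - 1`. -/
def a2plus (F : (Fin (d + 1) → ℂ) → ℂ) (u : Fn d) (χ : ℝ → ℝ) (R : ℝ) : Sym d := fun x ξ =>
  ((lam2 F u χ R x ξ - 1 : ℝ) : ℂ)

/-- The diagonalized second-order symbol `a₂^{(1)}(x,ξ) = |ξ|² ã⁺_{2,R}(x,ξ)`. -/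
def a2one (F : (Fin (d + 1) → ℂ) → ℂ) (u : Fn d) (χ : ℝ → ℝ) (R : ℝ) : Sym d := fun x ξ =>
  (((rnorm ξ) ^ 2 * (lam2 F u χ R x ξ - 1) : ℝ) : ℂ)

/-- The real scalar symbol `ℒ(x,ξ) = |ξ|² + a₂^{(1)}(x,ξ)`. -/
def Lscal (F : (Fin (d + 1) → ℂ) → ℂ) (u : Fn d) (χ : ℝ → ℝ) (R : ℝ) :
    Vec d → Vec d → ℝ := fun x ξ =>
  (rnorm ξ) ^ 2 + (rnorm ξ) ^ 2 * (lam2 F u χ R x ξ - 1)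

/-- The matrix `S(x,ξ)`. -/
def Smat (F : (Fin (d + 1) → ℂ) → ℂ) (u : Fn d) (χ : ℝ → ℝ) (R : ℝ) (x ξ : Vec d) :
    Matrix (Fin 2) (Fin 2) ℂ :=
  !![s1sym F u χ R x ξ, s2sym F u χ R x ξ;
     (starRingEnd ℂ) (s2sym F u χ R x ξ), s1sym F u χ R x ξ]

/-- The matrix `S^{-1}(x,ξ)`. -/
def SmatInv (F : (Fin (d + 1) → ℂ) → ℂ) (u : Fn d) (χ : ℝ → ℝ) (R : ℝ) (x ξ : Vec d) :
    Matrix (Fin 2) (Fin 2) ℂ :=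
  !![s1sym F u χ R x ξ, -s2sym F u χ R x ξ;
     -(starRingEnd ℂ) (s2sym F u χ R x ξ), s1sym F u χ R x ξ]

/-- The matrix `Ã_{2,R}(x,ξ)`. -/
def A2tilMat (F : (Fin (d + 1) → ℂ) → ℂ) (u : Fn d) (χ : ℝ → ℝ) (R : ℝ) (x ξ : Vec d) :
    Matrix (Fin 2) (Fin 2) ℂ :=
  !![a2til F u χ R x ξ, b2til F u χ R x ξ;
     (starRingEnd ℂ) (b2til F u χ R x (-ξ)), a2til F u χ R x ξ]

/-- The matrix `E = diag(1,-1)`. -/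
def EmatM : Matrix (Fin 2) (Fin 2) ℂ := !![1, 0; 0, -1]

/-- The matrix of symbols `S^{-1}(x,ξ)`. -/
def SinvMatSym (F : (Fin (d + 1) → ℂ) → ℂ) (u : Fn d) (χ : ℝ → ℝ) (R : ℝ) :
    Fin 2 → Fin 2 → Sym d :=
  ![![s1sym F u χ R, fun x ξ => -s2sym F u χ R x ξ],
    ![fun x ξ => -(starRingEnd ℂ) (s2sym F u χ R x ξ), s1sym F u χ R]]

/-- The entry `s₁^{(1)}` of the matrix `S₁`. -/
def s1_1 (F : (Fin (d + 1) → ℂ) → ℂ) (u : Fn d) (χ : ℝ → ℝ) (R : ℝ) : Sym d := fun x ξ =>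
  1 / (2 * Complex.I) *
    (poisson (s2sym F u χ R) (starSym (s2sym F u χ R)) x ξ * s1sym F u χ R x ξ
      + 2 * poisson (s1sym F u χ R) (s2sym F u χ R) x ξ *
          (starRingEnd ℂ) (s2sym F u χ R x ξ))

/-- The entry `s₂^{(1)}` of the matrix `S₁`. -/
def s2_1 (F : (Fin (d + 1) → ℂ) → ℂ) (u : Fn d) (χ : ℝ → ℝ) (R : ℝ) : Sym d := fun x ξ =>
  1 / (2 * Complex.I) *
    (poisson (s2sym F u χ R) (starSym (s2sym F u χ R)) x ξ * s2sym F u χ R x ξ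
      + 2 * poisson (s1sym F u χ R) (s2sym F u χ R) x ξ * s1sym F u χ R x ξ)

/-- The matrix `S₁(x,ξ)`. -/
def S1mat (F : (Fin (d + 1) → ℂ) → ℂ) (u : Fn d) (χ : ℝ → ℝ) (R : ℝ) (x ξ : Vec d) :
    Matrix (Fin 2) (Fin 2) ℂ :=
  (1 / (2 * Complex.I)) •
    (!![poisson (s2sym F u χ R) (starSym (s2sym F u χ R)) x ξ,
          2 * poisson (s1sym F u χ R) (s2sym F u χ R) x ξ;
        -2 * poisson (s1sym F u χ R) (starSym (s2sym F u χ R)) x (-ξ),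
          poisson (s2sym F u χ R) (starSym (s2sym F u χ R)) x (-ξ)] *
      Smat F u χ R x ξ)

/-- The symbol `g₁`. -/
def g1sym (F : (Fin (d + 1) → ℂ) → ℂ) (u : Fn d) (χ : ℝ → ℝ) (R : ℝ) : Sym d := fun x ξ =>
  1 / (2 * Complex.I) * poisson (s1_1 F u χ R) (s1sym F u χ R) x ξ
    - 1 / (2 * Complex.I) * poisson (s2_1 F u χ R) (starSym (s2sym F u χ R)) x ξ
    + 1 / 8 * sigmaB (s2sym F u χ R) (starSym (s2sym F u χ R)) x ξ

/-- The symbol `g₂`. -/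
def g2sym (F : (Fin (d + 1) → ℂ) → ℂ) (u : Fn d) (χ : ℝ → ℝ) (R : ℝ) : Sym d := fun x ξ =>
  -(1 / (2 * Complex.I)) * poisson (s1_1 F u χ R) (s2sym F u χ R) x ξ
    + 1 / (2 * Complex.I) * poisson (s2_1 F u χ R) (s1sym F u χ R) x ξ

/-- The derivative operator `∂_{x_i}` at the level of Fourier coefficients. -/
def dOp (i : Fin d) (c : Seq d) : Seq d := fun n => Complex.I * ((n i : ℝ) : ℂ) * c n

/-- A positive constant depending monotonically on a size parameter
(hence bounded from above as the parameter goes to zero). -/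
def GoodConst (C : ℝ → ℝ) : Prop := Monotone C ∧ ∀ x : ℝ, 0 < C x



lemma cs_tsum {ι : Type*} {f g : ι → ℝ} (hf : Summable fun i => f i ^ 2)
    (hg : Summable fun i => g i ^ 2) :
    (Summable fun i => f i * g i) ∧
      (∑' i, f i * g i) ^ 2 ≤ (∑' i, f i ^ 2) * ∑' i, g i ^ 2 := by
  have hfg : Summable fun i => f i * g i := by
    refine Summable.of_norm_bounded (hf.add hg) fun i => ?_
    rw [Real.norm_eq_abs, abs_le]
    constructor <;> nlinarith [sq_nonneg (f i + g i), sq_nonneg (f i - g i), sq_nonneg (f i), sq_nonneg (g i)]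
  refine ⟨hfg, ?_⟩
  have h := discrim_le_zero (a := ∑' i, g i ^ 2) (b := -2 * ∑' i, f i * g i)
    (c := ∑' i, f i ^ 2) (fun x => by
      have e : (∑' i, g i ^ 2) * (x * x) + (-2 * ∑' i, f i * g i) * x + ∑' i, f i ^ 2
          = ∑' i, (f i - x * g i) ^ 2 := by
        have h1 := (hg.mul_right (x * x))
        have h2 := (hfg.mul_right (-2 * x))
        have : (fun i => (f i - x * g i) ^ 2) =
            fun i => (g i ^ 2 * (x * x) + f i * g i * (-2 * x)) + f i ^ 2 := by
          funext i; ring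
        rw [this, (h1.add h2).tsum_add hf, h1.tsum_add h2, tsum_mul_right, tsum_mul_right]
        ring
      rw [e]
      exact tsum_nonneg fun i => sq_nonneg _)
  unfold discrim at h
  nlinarith

lemma znorm_eq (n : Zd d) : znorm n = ‖WithLp.toLp 2 (fun i => (n i : ℝ))‖ := by
  rw [EuclideanSpace.norm_eq]; simp [znorm]

lemma znorm_nonneg (n : Zd d) : 0 ≤ znorm n := Real.sqrt_nonneg _

lemma znorm_add (m n : Zd d) : znorm (m + n) ≤ znorm m + znorm n := by
  simp only [znorm_eq]
  refine le_trans (le_of_eq ?_) (norm_add_le _ _)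
  congr 1
  ext i; simp

lemma znorm_neg (n : Zd d) : znorm (-n) = znorm n := by simp [znorm]

lemma jb_eq (n : Zd d) : jb n = Real.sqrt (1 + znorm n ^ 2) := by
  rw [znorm, Real.sq_sqrt (Finset.sum_nonneg fun i _ => sq_nonneg _)]; rfl

lemma jb_sq (n : Zd d) : jb n ^ 2 = 1 + znorm n ^ 2 := by
  rw [jb_eq, Real.sq_sqrt (by positivity)]

lemma jb_nonneg (n : Zd d) : 0 ≤ jb n := Real.sqrt_nonneg _

lemma one_le_jb (n : Zd d) : 1 ≤ jb n := by
  have := jb_sq n; nlinarith [jb_nonneg n, sq_nonneg (znorm n)]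

lemma jb_pos (n : Zd d) : 0 < jb n := lt_of_lt_of_le one_pos (one_le_jb n)

lemma znorm_le_jb (n : Zd d) : znorm n ≤ jb n :=
  abs_le_of_sq_le_sq' (by rw [jb_sq]; linarith) (jb_nonneg n) |>.2

lemma jb_add (m n : Zd d) : jb (m + n) ≤ jb m + znorm n := by
  have h0 := znorm_nonneg (m + n)
  have h1 := znorm_add m n
  have h2 := znorm_le_jb m
  have := znorm_nonneg n
  have := znorm_nonneg m
  refine abs_le_of_sq_le_sq' ?_ (by have := jb_nonneg m; linarith) |>.2
  have e : (jb m + znorm n) ^ 2 = jb m ^ 2 + 2 * jb m * znorm n + znorm n ^ 2 := by ring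
  rw [e, jb_sq, jb_sq]
  nlinarith

lemma jb_le_double (j : Zd d) : jb j ≤ jb (j + j) := by
  refine abs_le_of_sq_le_sq' ?_ (jb_nonneg _) |>.2
  have : znorm (j + j) ^ 2 = 4 * znorm j ^ 2 := by
    unfold znorm
    rw [Real.sq_sqrt (Finset.sum_nonneg fun i _ => sq_nonneg _),
      Real.sq_sqrt (Finset.sum_nonneg fun i _ => sq_nonneg _), Finset.mul_sum]
    refine Finset.sum_congr rfl fun i _ => ?_
    simp; ring
  rw [jb_sq, jb_sq, this]
  nlinarith [sq_nonneg (znorm j)]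

lemma jb_double_le (j : Zd d) : jb (j + j) ≤ 2 * jb j := by
  have := jb_add j j; have := znorm_le_jb j; linarith

lemma summable_prod_inv (d : ℕ) :
    Summable fun n : Zd d => ∏ i, (1 + ((n i : ℝ)) ^ 2)⁻¹ := by
  induction d with
  | zero => exact Summable.of_finite
  | succ d ih =>
    have h1 : Summable fun k : ℤ => (1 + (k : ℝ) ^ 2)⁻¹ := by
      have h2 : Summable fun k : ℤ => 1 / (k : ℝ) ^ 2 :=
        Real.summable_one_div_int_pow.2 (by norm_num)
      have h3 : Summable fun k : ℤ => 1 / (k : ℝ) ^ 2 + if k = 0 then 1 else 0 := by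
        refine h2.add (summable_of_ne_finset_zero (s := {0}) ?_)
        intro b hb; simp at hb; simp [hb]
      refine Summable.of_nonneg_of_le (fun k => by positivity) (fun k => ?_) h3
      by_cases hk : k = 0
      · simp [hk]
      · have : (0:ℝ) < (k:ℝ)^2 := by positivity
        simp only [hk, if_false, add_zero, one_div]
        gcongr; linarith
    have h := h1.mul_of_nonneg ih (fun k => by positivity) (fun n => by positivity)
    rw [← (Fin.consEquiv (fun _ : Fin (d + 1) => ℤ)).summable_iff]
    refine h.congr fun p => ?_
    simp [Fin.prod_univ_succ, Fin.consEquiv, mul_comm]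

lemma summable_jb (s₀ : ℕ) (h : d < s₀) :
    Summable fun n : Zd d => (jb n ^ (-(s₀ : ℝ))) ^ 2 := by
  refine Summable.of_nonneg_of_le (fun n => sq_nonneg _) (fun n => ?_) (summable_prod_inv d)
  have e : (jb n ^ (-(s₀ : ℝ))) ^ 2 = ((jb n ^ 2) ^ s₀)⁻¹ := by
    rw [Real.rpow_neg (jb_nonneg n), Real.rpow_natCast, inv_pow, ← pow_mul, ← pow_mul, mul_comm]
  have hj := one_le_jb n
  rw [e, Finset.prod_inv_distrib]
  refine inv_anti₀ (Finset.prod_pos fun i _ => by positivity) ?_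
  calc ∏ i, (1 + ((n i : ℝ)) ^ 2) ≤ ∏ i : Fin d, jb n ^ 2 := by
        refine Finset.prod_le_prod (fun i _ => by positivity) fun i hi => ?_
        rw [jb, Real.sq_sqrt (by positivity)]
        gcongr
        exact Finset.single_le_sum (f := fun i => ((n i : ℝ)) ^ 2) (fun i _ => sq_nonneg _) hi
    _ = (jb n ^ 2) ^ d := by simp
    _ ≤ (jb n ^ 2) ^ s₀ := pow_le_pow_right₀ (by nlinarith) h.le

/-- weighted `ℓ¹` bound -/
lemma l1_bound (ρ : ℝ) (s₀ : ℕ) (h : d < s₀) (c : Seq d) (hc : InHsSeq (ρ + s₀) c) :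
    (Summable fun n => jb n ^ ρ * ‖c n‖) ∧ ∑' n, jb n ^ ρ * ‖c n‖ ≤
      Real.sqrt (∑' n : Zd d, (jb n ^ (-(s₀ : ℝ))) ^ 2) * hsNorm (ρ + s₀) c := by
  have e1 : (fun n => jb n ^ (2 * (ρ + s₀)) * ‖c n‖ ^ 2) =
      fun n => (jb n ^ (ρ + s₀) * ‖c n‖) ^ 2 := by
    funext n
    rw [mul_pow, ← Real.rpow_natCast (jb n ^ _), ← Real.rpow_mul (jb_nonneg n)]
    congr 2; push_cast; ring
  have e2 : (fun n => jb n ^ ρ * ‖c n‖) =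
      fun n => jb n ^ (-(s₀ : ℝ)) * (jb n ^ (ρ + s₀) * ‖c n‖) := by
    funext n
    rw [← mul_assoc, ← Real.rpow_add (jb_pos n)]; congr 2; ring
  unfold InHsSeq at hc
  rw [e1] at hc
  have := cs_tsum (summable_jb s₀ h) hc
  rw [e2]
  refine ⟨this.1, ?_⟩
  rw [hsNorm, hsNormSq, e1, ← Real.sqrt_mul (tsum_nonneg fun n => sq_nonneg _)]
  exact Real.le_sqrt_of_sq_le this.2

lemma young {P : Type*} (w : P → ℝ) (hw0 : ∀ p, 0 ≤ w p) (hw : Summable w) (σ : P → Zd d)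
    (g : Zd d → ℝ) (hg : Summable fun n => g n ^ 2) :
    (∀ j, Summable fun p => w p * g (j - σ p)) ∧
    (Summable fun j => (∑' p, w p * g (j - σ p)) ^ 2) ∧
    ∑' j, (∑' p, w p * g (j - σ p)) ^ 2 ≤ (∑' p, w p) ^ 2 * ∑' n, g n ^ 2 := by
  have h1 : Summable fun q : P × Zd d => w q.1 * g q.2 ^ 2 :=
    hw.mul_of_nonneg hg hw0 fun n => sq_nonneg _
  let e : P × Zd d ≃ P × Zd d :=
    { toFun := fun q => (q.1, q.2 - σ q.1)
      invFun := fun q => (q.1, q.2 + σ q.1)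
      left_inv := fun q => by simp
      right_inv := fun q => by simp }
  have h2 : Summable fun q : P × Zd d => w q.1 * g (q.2 - σ q.1) ^ 2 := by
    have := (e.summable_iff).2 h1
    exact this
  have h3 : Summable fun q : Zd d × P => w q.2 * g (q.1 - σ q.2) ^ 2 := h2.prod_symm
  have h4 : ∀ j, Summable fun p => w p * g (j - σ p) ^ 2 := fun j => h3.prod_factor j
  have h5 : ∀ j, (Summable fun p => w p * g (j - σ p)) ∧
      (∑' p, w p * g (j - σ p)) ^ 2 ≤ (∑' p, w p) * ∑' p, w p * g (j - σ p) ^ 2 := by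
    intro j
    have ea : ∀ p, Real.sqrt (w p) ^ 2 = w p := fun p => Real.sq_sqrt (hw0 p)
    have eb : ∀ p, (Real.sqrt (w p) * g (j - σ p)) ^ 2 = w p * g (j - σ p) ^ 2 := fun p => by
      rw [mul_pow, ea]
    have ec : ∀ p, Real.sqrt (w p) * (Real.sqrt (w p) * g (j - σ p)) = w p * g (j - σ p) :=
      fun p => by rw [← mul_assoc, ← sq, ea]
    have := cs_tsum (f := fun p => Real.sqrt (w p))
      (g := fun p => Real.sqrt (w p) * g (j - σ p)) (by simpa only [ea] using hw)
      (by simpa only [eb] using h4 j)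
    simpa only [ea, eb, ec] using this
  have h6 : Summable fun j => (∑' p, w p) * ∑' p, w p * g (j - σ p) ^ 2 :=
    h3.prod.mul_left _
  have h7 : Summable fun j => (∑' p, w p * g (j - σ p)) ^ 2 :=
    Summable.of_nonneg_of_le (fun j => sq_nonneg _) (fun j => (h5 j).2) h6
  refine ⟨fun j => (h5 j).1, h7, ?_⟩
  refine (h7.tsum_le_tsum (fun j => (h5 j).2) h6).trans (le_of_eq ?_)
  rw [tsum_mul_left, sq, mul_assoc]
  congr 1
  rw [hw.tsum_mul_tsum hg h1, ← h3.tsum_prod, ← e.tsum_eq, ← (Equiv.prodComm _ _).tsum_eq]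
  rfl

lemma cut_ne_zero {χ : ℝ → ℝ} (hχ : IsCutoff χ) {ε : ℝ} (hε₀ : 0 < ε) (hε₁ : ε < 1 / 4)
    {j k : Zd d} (h : cutFactor χ ε j k ≠ 0) : znorm (j - k) ≤ 2 / 5 * jb (j + k) := by
  have h1 : ¬ (8 / 5 ≤ |znorm (j - k) / (ε * jb (j + k))|) := fun h2 => h (hχ.eq_zero _ h2)
  have hp : 0 < ε * jb (j + k) := mul_pos hε₀ (jb_pos _)
  rw [abs_of_nonneg (div_nonneg (znorm_nonneg _) hp.le), not_le, div_lt_iff₀ hp] at h1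
  nlinarith [jb_pos (j + k)]

lemma cut_ne_one {χ : ℝ → ℝ} (hχ : IsCutoff χ) {ε : ℝ} (hε₀ : 0 < ε)
    {j k : Zd d} (h : cutFactor χ ε j k ≠ 1) : jb (j + k) ≤ ε⁻¹ * znorm (j - k) := by
  have h1 : ¬ (|znorm (j - k) / (ε * jb (j + k))| ≤ 5 / 4) := fun h2 => h (hχ.eq_one _ h2)
  have hp : 0 < ε * jb (j + k) := mul_pos hε₀ (jb_pos _)
  rw [abs_of_nonneg (div_nonneg (znorm_nonneg _) hp.le), not_le, lt_div_iff₀ hp] at h1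
  rw [inv_mul_eq_div, le_div_iff₀ hε₀]
  nlinarith [jb_pos (j + k)]

lemma cut_nonneg {χ : ℝ → ℝ} (hχ : IsCutoff χ) (ε : ℝ) (j k : Zd d) :
    0 ≤ cutFactor χ ε j k := (hχ.mem _).1

lemma cut_le_one {χ : ℝ → ℝ} (hχ : IsCutoff χ) (ε : ℝ) (j k : Zd d) :
    cutFactor χ ε j k ≤ 1 := (hχ.mem _).2

lemma comp_aux {j k : Zd d} (h : znorm (j - k) ≤ 2 / 5 * jb (j + k)) : jb j ≤ 5 * jb k := by
  have h1 := jb_le_double j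
  have h2 : jb (j + j) ≤ jb (j + k) + znorm (j - k) := by
    have := jb_add (j + k) (j - k)
    rwa [show j + k + (j - k) = j + j by abel] at this
  have h3 : jb (j + k) ≤ jb (k + k) + znorm (j - k) := by
    have := jb_add (k + k) (j - k)
    rwa [show k + k + (j - k) = j + k by abel] at this
  have h4 := jb_double_le k
  have := jb_pos k
  linarith

lemma comp_cut {χ : ℝ → ℝ} (hχ : IsCutoff χ) {ε : ℝ} (hε₀ : 0 < ε) (hε₁ : ε < 1 / 4)
    {j k : Zd d} (h : cutFactor χ ε j k ≠ 0) : jb j ≤ 5 * jb k ∧ jb k ≤ 5 * jb j := by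
  have h1 := cut_ne_zero hχ hε₀ hε₁ h
  refine ⟨comp_aux h1, comp_aux ?_⟩
  rwa [← znorm_neg, neg_sub, add_comm k j]

lemma rpow_comp {x y M : ℝ} (s : ℝ) (hx : 0 < x) (hy : 0 < y) (hM : 1 ≤ M)
    (h1 : x ≤ M * y) (h2 : y ≤ M * x) : x ^ s ≤ M ^ |s| * y ^ s := by
  have hM0 : 0 < M := by linarith
  rcases le_total 0 s with hs | hs
  · rw [abs_of_nonneg hs, ← Real.mul_rpow hM0.le hy.le]
    exact Real.rpow_le_rpow hx.le h1 hs
  · rw [abs_of_nonpos hs, Real.rpow_neg hM0.le, ← div_eq_inv_mul, le_div_iff₀ (by positivity),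
      ← Real.mul_rpow hx.le hM0.le]
    exact Real.rpow_le_rpow_of_nonpos hy (by linarith) hs

lemma cut1_bound {χ : ℝ → ℝ} (hχ : IsCutoff χ) {ε : ℝ} (hε₀ : 0 < ε) (hε₁ : ε < 1 / 4) (s : ℝ)
    (j k : Zd d) : jb j ^ s * cutFactor χ ε j k ≤ 25 ^ |s| * jb k ^ s := by
  have hk := jb_pos k
  have hj := jb_pos j
  by_cases h : cutFactor χ ε j k = 0
  · rw [h, mul_zero]; positivity
  · have := comp_cut hχ hε₀ hε₁ h
    have h3 := rpow_comp (M := 25) s hj hk (by norm_num) (by linarith) (by linarith)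
    refine le_trans ?_ h3
    exact mul_le_of_le_one_right (by positivity) (cut_le_one hχ _ _ _)

lemma cut2_bound {χ : ℝ → ℝ} (hχ : IsCutoff χ) {ε : ℝ} (hε₀ : 0 < ε) (hε₁ : ε < 1 / 4) (s : ℝ)
    (j l k : Zd d) :
    jb j ^ s * (cutFactor χ ε j l * cutFactor χ ε l k) ≤ 25 ^ |s| * jb k ^ s := by
  have hk := jb_pos k
  have hj := jb_pos j
  by_cases h : cutFactor χ ε j l = 0
  · rw [h, zero_mul, mul_zero]; positivity
  by_cases h' : cutFactor χ ε l k = 0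
  · rw [h', mul_zero, mul_zero]; positivity
  · have := comp_cut hχ hε₀ hε₁ h
    have := comp_cut hχ hε₀ hε₁ h'
    have h3 := rpow_comp (M := 25) s hj hk (by norm_num) (by linarith) (by linarith)
    refine le_trans ?_ h3
    exact mul_le_of_le_one_right (by positivity)
      (mul_le_one₀ (cut_le_one hχ _ _ _) (cut_nonneg hχ _ _ _) (cut_le_one hχ _ _ _))

lemma diff_freq {χ : ℝ → ℝ} (hχ : IsCutoff χ) {ε : ℝ} (hε₀ : 0 < ε)
    {j l k : Zd d}
    (h : cutFactor χ ε j l * cutFactor χ ε l k - cutFactor χ ε j k ≠ 0) :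
    jb j ≤ (2 * (2 + ε⁻¹)) * (jb (j - l) * jb (l - k)) := by
  have hi : 0 < ε⁻¹ := inv_pos.2 hε₀
  have z1 := znorm_nonneg (j - l)
  have z2 := znorm_nonneg (l - k)
  have key : jb j ≤ (2 + ε⁻¹) * (znorm (j - l) + znorm (l - k)) := by
    have h0 := jb_le_double j
    by_cases h1 : cutFactor χ ε j l = 1
    · by_cases h2 : cutFactor χ ε l k = 1
      · by_cases h3 : cutFactor χ ε j k = 1
        · exact absurd (by rw [h1, h2, h3]; ring) h
        · have h4 := cut_ne_one hχ hε₀ h3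
          have h5 := jb_add (j + k) (j - k)
          rw [show j + k + (j - k) = j + j by abel] at h5
          have h6 := znorm_add (j - l) (l - k)
          rw [show j - l + (l - k) = j - k by abel] at h6
          nlinarith
      · have h4 := cut_ne_one hχ hε₀ h2
        have h5 := jb_add (l + k) ((j - l) + (j - k))
        rw [show l + k + ((j - l) + (j - k)) = j + j by abel] at h5
        have h6 := znorm_add (j - l) (l - k)
        rw [show j - l + (l - k) = j - k by abel] at h6
        have h7 := znorm_add (j - l) (j - k)
        nlinarith
    · have h4 := cut_ne_one hχ hε₀ h1
      have h5 := jb_add (j + l) (j - l)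
      rw [show j + l + (j - l) = j + j by abel] at h5
      nlinarith
  have a1 := znorm_le_jb (j - l)
  have a2 := znorm_le_jb (l - k)
  have b1 := one_le_jb (j - l)
  have b2 := one_le_jb (l - k)
  refine key.trans ?_
  have : znorm (j - l) + znorm (l - k) ≤ 2 * (jb (j - l) * jb (l - k)) := by nlinarith
  nlinarith

lemma diff_bound {χ : ℝ → ℝ} (hχ : IsCutoff χ) {ε : ℝ} (hε₀ : 0 < ε) (hε₁ : ε < 1 / 4)
    (s : ℝ) {ρ : ℝ} (hρ : 0 ≤ ρ) (j l k : Zd d) :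
    jb j ^ (s + ρ) * |cutFactor χ ε j l * cutFactor χ ε l k - cutFactor χ ε j k| ≤
      (2 * 25 ^ |s| * (2 * (2 + ε⁻¹)) ^ ρ) * (jb (j - l) ^ ρ * jb (l - k) ^ ρ) * jb k ^ s := by
  have hi : 0 < ε⁻¹ := inv_pos.2 hε₀
  have hk := jb_pos k
  have hj := jb_pos j
  have h1 := jb_pos (j - l)
  have h2 := jb_pos (l - k)
  by_cases h : cutFactor χ ε j l * cutFactor χ ε l k - cutFactor χ ε j k = 0
  · rw [h, abs_zero, mul_zero]; positivity
  have e1 : jb j ^ ρ ≤ (2 * (2 + ε⁻¹)) ^ ρ * (jb (j - l) ^ ρ * jb (l - k) ^ ρ) := by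
    rw [← Real.mul_rpow h1.le h2.le, ← Real.mul_rpow (by positivity) (by positivity)]
    exact Real.rpow_le_rpow hj.le (diff_freq hχ hε₀ h) hρ
  have e2 : jb j ^ s * |cutFactor χ ε j l * cutFactor χ ε l k - cutFactor χ ε j k| ≤
      2 * 25 ^ |s| * jb k ^ s := by
    have c1 := cut1_bound hχ hε₀ hε₁ s j k
    have c2 := cut2_bound hχ hε₀ hε₁ s j l k
    have n1 := cut_nonneg hχ ε j k
    have n2 := mul_nonneg (cut_nonneg hχ ε j l) (cut_nonneg hχ ε l k)
    have : |cutFactor χ ε j l * cutFactor χ ε l k - cutFactor χ ε j k| ≤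
        cutFactor χ ε j l * cutFactor χ ε l k + cutFactor χ ε j k := by
      rw [abs_le]; constructor <;> linarith
    have hjs : 0 ≤ jb j ^ s := by positivity
    nlinarith [mul_le_mul_of_nonneg_left this hjs]
  calc _ = jb j ^ ρ * (jb j ^ s * |cutFactor χ ε j l * cutFactor χ ε l k - cutFactor χ ε j k|) := by
        rw [Real.rpow_add hj]; ring
    _ ≤ ((2 * (2 + ε⁻¹)) ^ ρ * (jb (j - l) ^ ρ * jb (l - k) ^ ρ)) * (2 * 25 ^ |s| * jb k ^ s) := by
        gcongr
    _ = _ := by ring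

abbrev kap (d : ℕ) : ℂ := (((2 * π : ℝ) ^ (-(d : ℝ) / 2) : ℝ) : ℂ)

lemma hasSum_congr_fun {f g : Zd d → ℂ} {x : ℂ} (h : HasSum f x) (e : ∀ l, g l = f l) :
    HasSum g x := by
  rw [funext e]; exact h

lemma fCoeff_mul (a b : Fn d) (hA : Summable fun n => ‖fCoeff a n‖)
    (hB : Summable fun n => ‖fCoeff b n‖)
    (ha : ∀ x : Vec d, HasSum
      (fun n : Zd d => (((2 * π : ℝ) ^ (-(d : ℝ) / 2) : ℝ) : ℂ) * fCoeff a n *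
        Complex.exp (Complex.I * ((∑ i, (n i : ℝ) * x i : ℝ) : ℂ))) (a x))
    (hb : ∀ x : Vec d, HasSum
      (fun n : Zd d => (((2 * π : ℝ) ^ (-(d : ℝ) / 2) : ℝ) : ℂ) * fCoeff b n *
        Complex.exp (Complex.I * ((∑ i, (n i : ℝ) * x i : ℝ) : ℂ))) (b x)) (n : Zd d) :
    HasSum (fun l => kap d * (fCoeff a (n - l) * fCoeff b l)) (fCoeff (fun x => a x * b x) n) := by
  have hexp : ∀ t : ℝ, ‖Complex.exp (Complex.I * (t : ℂ))‖ = 1 := fun t => by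
    rw [mul_comm]; exact Complex.norm_exp_ofReal_mul_I t
  have hexp' : ∀ t : ℝ, ‖Complex.exp (-Complex.I * (t : ℂ))‖ = 1 := fun t => by
    have := hexp (-t); rwa [Complex.ofReal_neg, mul_neg, ← neg_mul] at this
  have hac : Continuous a := by
    have : a = fun x => ∑' n : Zd d, kap d * fCoeff a n *
        Complex.exp (Complex.I * ((∑ i, (n i : ℝ) * x i : ℝ) : ℂ)) :=
      funext fun x => (ha x).tsum_eq.symm
    rw [this]
    refine continuous_tsum (u := fun n => ‖kap d‖ * ‖fCoeff a n‖) (fun n => by fun_prop)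
      (hA.mul_left _) fun n x => ?_
    rw [norm_mul, norm_mul, hexp, mul_one]
  let F : Zd d → Vec d → ℂ := fun l x => a x * (kap d * fCoeff b l *
        Complex.exp (Complex.I * ((∑ i, (l i : ℝ) * x i : ℝ) : ℂ))) *
        Complex.exp (-Complex.I * ((∑ i, (n i : ℝ) * x i : ℝ) : ℂ))
  have hint : ∀ f : Vec d → ℂ, Continuous f → Integrable f (volume.restrict (box d)) := by
    intro f hf
    have hK : IsCompact (Set.univ.pi fun _ : Fin d => Set.Icc (0 : ℝ) (2 * π)) :=
      isCompact_univ_pi fun _ => isCompact_Icc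
    exact (hf.continuousOn.integrableOn_compact hK).mono_set
      (Set.pi_mono fun _ _ => Set.Ioc_subset_Icc_self)
  have hFi : ∀ l, Integrable (F l) (volume.restrict (box d)) := fun l => hint _
    ((hac.mul (by fun_prop)).mul (by fun_prop))
  have hFn : ∀ l x, ‖F l x‖ = (‖kap d‖ * ‖fCoeff b l‖) * ‖a x‖ := fun l x => by
    simp only [F]
    rw [norm_mul, norm_mul, norm_mul, norm_mul, hexp, hexp']; ring
  have hS : Summable fun l => ∫ x in box d, ‖F l x‖ := by
    simp only [hFn, integral_const_mul]
    exact (hB.mul_left _).mul_right _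
  have h := (hasSum_integral_of_summable_integral_norm hFi hS).mul_left (kap d)
  have e1 : (∫ x in box d, ∑' l, F l x) = ∫ x in box d, (a x * b x) *
      Complex.exp (-Complex.I * ((∑ i, (n i : ℝ) * x i : ℝ) : ℂ)) := by
    congr 1; funext x
    exact (((hb x).mul_left (a x)).mul_right _).tsum_eq
  rw [e1] at h
  refine hasSum_congr_fun h fun l => ?_
  have e2 : ∀ x, F l x = (kap d * fCoeff b l) * (a x *
      Complex.exp (-Complex.I * ((∑ i, ((n - l) i : ℝ) * x i : ℝ) : ℂ))) := by
    intro x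
    simp only [F]
    have : Complex.exp (-Complex.I * ((∑ i, ((n - l) i : ℝ) * x i : ℝ) : ℂ)) =
        Complex.exp (Complex.I * ((∑ i, (l i : ℝ) * x i : ℝ) : ℂ)) *
        Complex.exp (-Complex.I * ((∑ i, (n i : ℝ) * x i : ℝ) : ℂ)) := by
      rw [← Complex.exp_add]
      congr 1
      have : (∑ i, ((n - l) i : ℝ) * x i : ℝ) =
        (∑ i, (n i : ℝ) * x i : ℝ) - (∑ i, (l i : ℝ) * x i : ℝ) := by
        rw [← Finset.sum_sub_distrib]
        refine Finset.sum_congr rfl fun i _ => ?_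
        simp [sub_mul]
      rw [this]; push_cast; ring
    rw [this]; ring
  simp only [e2, integral_const_mul]
  rw [fCoeff]; ring

lemma hs_sq (s : ℝ) (c : Seq d) :
    (fun n => jb n ^ (2 * s) * ‖c n‖ ^ 2) = fun n => (jb n ^ s * ‖c n‖) ^ 2 := by
  funext n
  rw [mul_pow, ← Real.rpow_natCast (jb n ^ _), ← Real.rpow_mul (jb_nonneg n)]
  congr 2; push_cast; ring

lemma main_bound (s₀ : ℕ) (hs₀ : d < s₀) (ρ : ℝ) (hρ : 0 ≤ ρ)
    (χ : ℝ → ℝ) (hχ : IsCutoff χ) (ε : ℝ) (hε₀ : 0 < ε) (hε₁ : ε < 1 / 4) (s : ℝ)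
    (a b : Fn d) (c : Seq d) (ha : InHs (ρ + s₀) a) (hb : InHs (ρ + s₀) b) (hc : InHsSeq s c) :
    hsNorm (s + ρ)
          (fun j => paraC χ ε (fun x _ => a x) (paraC χ ε (fun x _ => b x) c) j
            - paraC χ ε (fun x _ => a x * b x) c j) ≤
      (‖kap d‖ ^ 2 * (2 * 25 ^ |s| * (2 * (2 + ε⁻¹)) ^ ρ)) *
        ((∑' n, jb n ^ ρ * ‖fCoeff a n‖) * (∑' n, jb n ^ ρ * ‖fCoeff b n‖)) * hsNorm s c := by
  obtain ⟨-, ha1, ha2⟩ := ha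
  obtain ⟨-, hb1, hb2⟩ := hb
  have hA := (l1_bound ρ s₀ hs₀ _ ha1).1
  have hB := (l1_bound ρ s₀ hs₀ _ hb1).1
  have hone : ∀ n : Zd d, 1 ≤ jb n ^ ρ := fun n => Real.one_le_rpow (one_le_jb n) hρ
  have hpos : ∀ n : Zd d, 0 ≤ jb n ^ ρ := fun n => zero_le_one.trans (hone n)
  have hle : ∀ (u : Seq d) n, ‖u n‖ ≤ jb n ^ ρ * ‖u n‖ := fun u n =>
    le_mul_of_one_le_left (norm_nonneg _) (hone n)
  have hA1 : Summable fun n => ‖fCoeff a n‖ :=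
    Summable.of_nonneg_of_le (fun n => norm_nonneg _) (hle _) hA
  have hB1 : Summable fun n => ‖fCoeff b n‖ :=
    Summable.of_nonneg_of_le (fun n => norm_nonneg _) (hle _) hB
  have hconv := fCoeff_mul a b hA1 hB1 ha2 hb2
  set A := fCoeff a with hAdef
  set B := fCoeff b with hBdef
  set κ := kap d with hκ
  set K : ℝ := 2 * 25 ^ |s| * (2 * (2 + ε⁻¹)) ^ ρ with hK
  have hi : 0 < ε⁻¹ := inv_pos.2 hε₀
  have hK0 : 0 ≤ K := by positivity
  let g : Zd d → ℝ := fun k => jb k ^ s * ‖c k‖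
  have hg0 : ∀ k, 0 ≤ g k := fun k => mul_nonneg (Real.rpow_nonneg (jb_nonneg k) _) (norm_nonneg _)
  let w : Zd d × Zd d → ℝ := fun p => (jb p.1 ^ ρ * ‖A p.1‖) * (jb p.2 ^ ρ * ‖B p.2‖)
  have hA0 : ∀ n, 0 ≤ jb n ^ ρ * ‖A n‖ := fun n => mul_nonneg (hpos n) (norm_nonneg _)
  have hB0 : ∀ n, 0 ≤ jb n ^ ρ * ‖B n‖ := fun n => mul_nonneg (hpos n) (norm_nonneg _)
  have hw0 : ∀ p, 0 ≤ w p := fun p => mul_nonneg (hA0 _) (hB0 _)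
  have hw : Summable w := hA.mul_of_nonneg hB hA0 hB0
  have hwle : ∀ p : Zd d × Zd d, ‖A p.1‖ * ‖B p.2‖ ≤ w p := fun p =>
    mul_le_mul (hle _ _) (hle _ _) (norm_nonneg _) (hA0 _)
  have hg : Summable fun n => g n ^ 2 := by
    unfold InHsSeq at hc; rwa [hs_sq] at hc
  obtain ⟨Y1, Y2, Y3⟩ := young w hw0 hw (fun p => p.1 + p.2) g hg
  let Φ1 : Zd d → Zd d × Zd d → ℂ := fun j p =>
    ((cutFactor χ ε j (j - p.1) * cutFactor χ ε (j - p.1) (j - (p.1 + p.2)) : ℝ) : ℂ) *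
      (A p.1 * B p.2) * c (j - (p.1 + p.2))
  let Φ2 : Zd d → Zd d × Zd d → ℂ := fun j p =>
    ((cutFactor χ ε j (j - (p.1 + p.2)) : ℝ) : ℂ) * (A p.1 * B p.2) * c (j - (p.1 + p.2))
  have hsum : ∀ (j : Zd d) (θ : Zd d × Zd d → ℝ), (∀ p, 0 ≤ θ p) →
      (∀ p, jb j ^ s * θ p ≤ 25 ^ |s| * jb (j - (p.1 + p.2)) ^ s) →
      Summable fun p : Zd d × Zd d => (θ p : ℂ) * (A p.1 * B p.2) * c (j - (p.1 + p.2)) := by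
    intro j θ hθ0 hθ
    have hj : 0 < jb j ^ s := Real.rpow_pos_of_pos (jb_pos j) s
    refine Summable.of_norm_bounded ((Y1 j).mul_left ((jb j ^ s)⁻¹ * 25 ^ |s|)) fun p => ?_
    rw [norm_mul, norm_mul, norm_mul, Complex.norm_real, Real.norm_of_nonneg (hθ0 p),
      mul_assoc (jb j ^ s)⁻¹, inv_mul_eq_div, le_div_iff₀ hj]
    calc θ p * (‖A p.1‖ * ‖B p.2‖) * ‖c (j - (p.1 + p.2))‖ * jb j ^ s
        = (jb j ^ s * θ p) * (‖A p.1‖ * ‖B p.2‖) * ‖c (j - (p.1 + p.2))‖ := by ring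
      _ ≤ (25 ^ |s| * jb (j - (p.1 + p.2)) ^ s) * w p * ‖c (j - (p.1 + p.2))‖ := by
          have := hwle p
          have := hθ p
          have := Real.rpow_nonneg (jb_nonneg (j - (p.1 + p.2))) s
          gcongr
      _ = 25 ^ |s| * (w p * g (j - (p.1 + p.2))) := by simp only [g]; ring
  have hΦ1 : ∀ j, Summable (Φ1 j) := fun j => hsum j _
    (fun p => mul_nonneg (cut_nonneg hχ _ _ _) (cut_nonneg hχ _ _ _))
    (fun p => cut2_bound hχ hε₀ hε₁ s _ _ _)
  have hΦ2 : ∀ j, Summable (Φ2 j) := fun j => hsum j _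
    (fun p => cut_nonneg hχ _ _ _) (fun p => cut1_bound hχ hε₀ hε₁ s _ _)
  have hT1 : ∀ j, paraC χ ε (fun x _ => a x) (paraC χ ε (fun x _ => b x) c) j =
      κ ^ 2 * ∑' p, Φ1 j p := by
    intro j
    simp only [paraC, symCoeff]
    change κ * (∑' l, (cutFactor χ ε j l : ℂ) * A (j - l) *
      (κ * ∑' k, (cutFactor χ ε l k : ℂ) * B (l - k) * c k)) = _
    rw [sq, mul_assoc, (hΦ1 j).tsum_prod]
    congr 1
    refine ((Equiv.subLeft j).tsum_eq _).symm.trans ?_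
    rw [← tsum_mul_left]
    refine tsum_congr fun m => ?_
    rw [mul_left_comm]
    congr 1
    rw [← tsum_mul_left]
    refine ((Equiv.subLeft ((Equiv.subLeft j) m)).tsum_eq _).symm.trans ?_
    refine tsum_congr fun n => ?_
    simp only [Equiv.subLeft_apply, sub_sub_cancel, Φ1, sub_sub]
    push_cast
    ring
  have hT2 : ∀ j, paraC χ ε (fun x _ => a x * b x) c j = κ ^ 2 * ∑' p, Φ2 j p := by
    intro j
    let e : Zd d × Zd d ≃ Zd d × Zd d :=
      { toFun := fun q => (j - q.1 - q.2, q.2)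
        invFun := fun q => (j - q.1 - q.2, q.2)
        left_inv := fun q => Prod.ext (by show j - (j - q.1 - q.2) - q.2 = q.1; abel) rfl
        right_inv := fun q => Prod.ext (by show j - (j - q.1 - q.2) - q.2 = q.1; abel) rfl }
    simp only [paraC, symCoeff]
    change κ * (∑' k, (cutFactor χ ε j k : ℂ) * fCoeff (fun x => a x * b x) (j - k) * c k) = _
    have he : Summable fun q => Φ2 j (e q) := e.summable_iff.2 (hΦ2 j)
    rw [sq, mul_assoc, ← e.tsum_eq, he.tsum_prod]
    congr 1
    rw [← tsum_mul_left]
    refine tsum_congr fun k => ?_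
    rw [← (hconv (j - k)).tsum_eq, tsum_mul_left, mul_left_comm, mul_assoc]
    congr 1
    rw [← tsum_mul_left, ← tsum_mul_right]
    refine tsum_congr fun n => ?_
    have : j - (j - k - n + n) = k := by abel
    simp only [Φ2, e, Equiv.coe_fn_mk, this]
  have hR : ∀ j, jb j ^ (s + ρ) * ‖paraC χ ε (fun x _ => a x) (paraC χ ε (fun x _ => b x) c) j
            - paraC χ ε (fun x _ => a x * b x) c j‖ ≤
      (‖κ‖ ^ 2 * K) * ∑' p, w p * g (j - (p.1 + p.2)) := by
    intro j
    have hj : 0 < jb j ^ (s + ρ) := Real.rpow_pos_of_pos (jb_pos j) _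
    rw [hT1, hT2, ← mul_sub, ← (hΦ1 j).tsum_sub (hΦ2 j), norm_mul, norm_pow, mul_left_comm,
      mul_assoc]
    refine mul_le_mul_of_nonneg_left ?_ (by positivity)
    rw [← le_div_iff₀' hj, mul_div_right_comm, ← tsum_mul_left]
    refine tsum_of_norm_bounded ((Y1 j).mul_left (K / jb j ^ (s + ρ))).hasSum fun p => ?_
    have hd := diff_bound hχ hε₀ hε₁ s hρ j (j - p.1) (j - (p.1 + p.2))
    rw [show j - (j - p.1) = p.1 by abel, show j - p.1 - (j - (p.1 + p.2)) = p.2 by abel] at hd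
    rw [div_mul_eq_mul_div, le_div_iff₀' hj]
    have e1 : Φ1 j p - Φ2 j p = ((cutFactor χ ε j (j - p.1) *
        cutFactor χ ε (j - p.1) (j - (p.1 + p.2)) - cutFactor χ ε j (j - (p.1 + p.2)) : ℝ) : ℂ) *
        (A p.1 * B p.2) * c (j - (p.1 + p.2)) := by
      simp only [Φ1, Φ2]; push_cast; ring
    rw [e1, norm_mul, norm_mul, norm_mul, Complex.norm_real, Real.norm_eq_abs]
    calc _ = (jb j ^ (s + ρ) * |cutFactor χ ε j (j - p.1) *
        cutFactor χ ε (j - p.1) (j - (p.1 + p.2)) - cutFactor χ ε j (j - (p.1 + p.2))|) *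
        ((‖A p.1‖ * ‖B p.2‖) * ‖c (j - (p.1 + p.2))‖) := by ring
      _ ≤ (K * (jb p.1 ^ ρ * jb p.2 ^ ρ) * jb (j - (p.1 + p.2)) ^ s) *
        ((‖A p.1‖ * ‖B p.2‖) * ‖c (j - (p.1 + p.2))‖) :=
          mul_le_mul_of_nonneg_right hd (by positivity)
      _ = _ := by simp only [w, g]; ring
  set R : Seq d := fun j => paraC χ ε (fun x _ => a x) (paraC χ ε (fun x _ => b x) c) j
            - paraC χ ε (fun x _ => a x * b x) c j with hRdef
  have hW : ∑' p, w p = (∑' n, jb n ^ ρ * ‖A n‖) * (∑' n, jb n ^ ρ * ‖B n‖) :=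
    (hA.tsum_mul_tsum hB hw).symm
  rw [← hW, hsNorm, hsNorm, hsNormSq, hsNormSq, hs_sq, hs_sq]
  have hW0 : 0 ≤ ∑' p, w p := tsum_nonneg hw0
  refine Real.sqrt_le_iff.2 ⟨by positivity, ?_⟩
  rw [mul_pow, mul_pow, Real.sq_sqrt (tsum_nonneg fun n => sq_nonneg _), mul_assoc]
  refine le_trans ?_ (mul_le_mul_of_nonneg_left Y3 (sq_nonneg _))
  rw [← tsum_mul_left]
  have hb : ∀ j, (jb j ^ (s + ρ) * ‖R j‖) ^ 2 ≤
      (‖κ‖ ^ 2 * K) ^ 2 * (∑' p, w p * g (j - (p.1 + p.2))) ^ 2 := fun j => by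
    rw [← mul_pow]
    exact pow_le_pow_left₀ (mul_nonneg (Real.rpow_nonneg (jb_nonneg j) _) (norm_nonneg _)) (hR j) 2
  have hs2 := Y2.mul_left ((‖κ‖ ^ 2 * K) ^ 2)
  exact (Summable.of_nonneg_of_le (fun j => sq_nonneg _) hb hs2).tsum_le_tsum hb hs2

/-- Proposition 2.5(i), eq. (2.24): if `a, b ∈ H^{ρ+s₀}(𝕋^d;ℂ)` are
functions (ξ-independent symbols), then
`‖(T_a T_b - T_{ab})h‖_{H^{s+ρ}} ≤ C ‖a‖_{H^{ρ+s₀}} ‖b‖_{H^{ρ+s₀}} ‖h‖_{H^s}`. -/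
theorem statement_6 (d : ℕ) (hd : 1 ≤ d) (s₀ : ℕ) (hs₀ : d < s₀) (ρ : ℝ) (hρ : 0 ≤ ρ)
    (χ : ℝ → ℝ) (hχ : IsCutoff χ) (ε : ℝ) (hε₀ : 0 < ε) (hε₁ : ε < 1 / 4) (s : ℝ) :
    ∃ C > (0 : ℝ), ∀ (a b : Fn d) (c : Seq d),
      InHs (ρ + s₀) a → InHs (ρ + s₀) b → InHsSeq s c →
      hsNorm (s + ρ)
          (fun j => paraC χ ε (fun x _ => a x) (paraC χ ε (fun x _ => b x) c) j
            - paraC χ ε (fun x _ => a x * b x) c j)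
        ≤ C * sobNorm (ρ + s₀) a * sobNorm (ρ + s₀) b * hsNorm s c := by
  have hi : 0 < ε⁻¹ := inv_pos.2 hε₀
  set Z : ℝ := Real.sqrt (∑' n : Zd d, (jb n ^ (-(s₀ : ℝ))) ^ 2) with hZ
  have hZ0 : 0 ≤ Z := Real.sqrt_nonneg _
  set C0 : ℝ := ‖kap d‖ ^ 2 * (2 * 25 ^ |s| * (2 * (2 + ε⁻¹)) ^ ρ) with hC0
  have hC00 : 0 ≤ C0 := by positivity
  refine ⟨C0 * Z ^ 2 + 1, by positivity, fun a b c ha hb hc => ?_⟩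
  refine (main_bound s₀ hs₀ ρ hρ χ hχ ε hε₀ hε₁ s a b c ha hb hc).trans ?_
  have h1 := (l1_bound ρ s₀ hs₀ _ ha.2.1).2
  have h2 := (l1_bound ρ s₀ hs₀ _ hb.2.1).2
  rw [← hC0]
  rw [← hZ] at h1 h2
  have n1 : 0 ≤ hsNorm (ρ + s₀) (fCoeff a) := Real.sqrt_nonneg _
  have n2 : 0 ≤ hsNorm (ρ + s₀) (fCoeff b) := Real.sqrt_nonneg _
  have n3 : 0 ≤ hsNorm s c := Real.sqrt_nonneg _
  have n4 : 0 ≤ ∑' n, jb n ^ ρ * ‖fCoeff b n‖ :=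
    tsum_nonneg fun n => mul_nonneg (Real.rpow_nonneg (jb_nonneg n) _) (norm_nonneg _)
  unfold sobNorm
  have h3 := mul_le_mul h1 h2 n4 (mul_nonneg hZ0 n1)
  calc _ ≤ C0 * (Z * hsNorm (ρ + s₀) (fCoeff a) * (Z * hsNorm (ρ + s₀) (fCoeff b))) *
        hsNorm s c := by gcongr
    _ = (C0 * Z ^ 2) * (hsNorm (ρ + s₀) (fCoeff a) * hsNorm (ρ + s₀) (fCoeff b) *
        hsNorm s c) := by ring
    _ ≤ (C0 * Z ^ 2 + 1) * (hsNorm (ρ + s₀) (fCoeff a) * hsNorm (ρ + s₀) (fCoeff b) *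
        hsNorm s c) := by gcongr; linarith
    _ = _ := by ring

end QLNLS
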